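/- The total F₂-dimension of the cohomology ker(D+d)/im(D+d) of the complex (SC(T), D+d) equals 1 if T admits a perfect matching, and equals 0 otherwise; in particular it is at most 1. -/

import Mathlib

open Polynomial Matrix

attribute [local instance] Classical.propDecidable

namespace Seifert

variable {V : Type} [Fintype V]

/-- A matching of a graph `G`: a finite set of edges of `G` that are pairwise disjoint. -/
def IsMatching (G : SimpleGraph V) (R : Finset (Sym2 V)) : Prop :=
  (∀ e ∈ R, e ∈ G.edgeSet) ∧
    ∀ e ∈ R, ∀ f ∈ R, e ≠ f → ∀ v : V, v ∈ e → v ∉ f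

/-- A perfect matching: a matching covering every vertex. -/
def IsPerfectMatching (G : SimpleGraph V) (R : Finset (Sym2 V)) : Prop :=
  IsMatching G R ∧ ∀ v : V, ∃ e ∈ R, v ∈ e

/-- A configuration on `G`: a matching (the set of red edges) together with an assignment
of a sign (`true` = plus, `false` = minus) to every vertex not covered by a red edge;
vertices covered by a red edge get `none`. -/
structure Config (G : SimpleGraph V) where
  red : Finset (Sym2 V)
  matching : IsMatching G red
  sign : V → Option Bool
  sign_none : ∀ v : V, sign v = none ↔ ∃ e ∈ red, v ∈ e

instance (G : SimpleGraph V) : Finite (Config G) :=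
  Finite.of_injective (fun C => (C.red, C.sign)) (by
    rintro ⟨r, hr, s, hs⟩ ⟨r', hr', s', hs'⟩ h
    simp only [Prod.mk.injEq] at h
    obtain ⟨h1, h2⟩ := h
    subst h1; subst h2; rfl)

noncomputable instance (G : SimpleGraph V) : Fintype (Config G) := Fintype.ofFinite _

/-- The grading `Q`: the number of minuses. -/
noncomputable def Qg {G : SimpleGraph V} (C : Config G) : ℕ :=
  (Finset.univ.filter fun v : V => C.sign v = some false).card

/-- The grading `E`: the number of minuses plus the number of red edges. -/
noncomputable def Eg {G : SimpleGraph V} (C : Config G) : ℕ := Qg C + C.red.card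

/-- `DStep C C'` holds iff `C'` is one of the summands of `D(C)`: it is obtained from `C`
by deleting one red edge `e` and assigning a plus to one endpoint of `e` and a minus to
the other. -/
def DStep {G : SimpleGraph V} (C C' : Config G) : Prop :=
  ∃ e ∈ C.red, C'.red = C.red.erase e ∧
    (∀ x : V, x ∉ e → C'.sign x = C.sign x) ∧
    ∃ u v : V, e = s(u, v) ∧ C'.sign u = some true ∧ C'.sign v = some false

/-- `dStep C C'` holds iff `C'` is one of the summands of `d(C)`: it is obtained from `C`
by changing the sign of one vertex from plus to minus. -/
def dStep {G : SimpleGraph V} (C C' : Config G) : Prop :=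
  C'.red = C.red ∧ ∃ w : V, C.sign w = some true ∧ C'.sign w = some false ∧
    ∀ x : V, x ≠ w → C'.sign x = C.sign x

/-- The linear map on spaces of `F₂`-valued functions induced by a relation `r`:
the basis vector of `a` is sent to the sum of the basis vectors of all `b` with `r a b`. -/
noncomputable def sumLin {α β : Type} [Fintype α] (r : α → β → Prop) :
    (α → ZMod 2) →ₗ[ZMod 2] (β → ZMod 2) where
  toFun f b := ∑ a : α, if r a b then f a else 0
  map_add' f g := by
    funext b
    simp only [Pi.add_apply]
    rw [← Finset.sum_add_distrib]
    exact Finset.sum_congr rfl fun a _ => by by_cases h : r a b <;> simp [h]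
  map_smul' c f := by
    funext b
    simp only [RingHom.id_apply, Pi.smul_apply, smul_eq_mul, Finset.mul_sum]
    exact Finset.sum_congr rfl fun a _ => by by_cases h : r a b <;> simp [h]

/-- The differential `D` on the total Seifert complex `SC(T)`. -/
noncomputable def Dmap (G : SimpleGraph V) :
    (Config G → ZMod 2) →ₗ[ZMod 2] (Config G → ZMod 2) :=
  sumLin DStep

/-- The differential `d` on the total Seifert complex `SC(T)`. -/
noncomputable def dmap (G : SimpleGraph V) :
    (Config G → ZMod 2) →ₗ[ZMod 2] (Config G → ZMod 2) :=
  sumLin dStep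

/-- The graded piece `SC^k(T,n)`: the `F₂`-vector space with basis the configurations
with `Q = k` and `E = n`. -/
abbrev SC (G : SimpleGraph V) (k n : ℤ) : Type :=
  {C : Config G // (Qg C : ℤ) = k ∧ (Eg C : ℤ) = n} → ZMod 2

/-- The differential `D` between graded pieces. (Mathematically it is nonzero only
from `SC^k(T,n)` to `SC^{k+1}(T,n)`.) -/
noncomputable def Dgr (G : SimpleGraph V) (k n k' n' : ℤ) :
    SC G k n →ₗ[ZMod 2] SC G k' n' :=
  sumLin fun C C' => DStep C.1 C'.1

/-- The dimension of the cohomology `ker g / im f` at the middle term of `A —f→ B —g→ C`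
(taking the image of `f` intersected with the kernel of `g`). -/
noncomputable def cohDim {A B M : Type} [AddCommGroup A] [AddCommGroup B] [AddCommGroup M]
    [Module (ZMod 2) A] [Module (ZMod 2) B] [Module (ZMod 2) M]
    (f : A →ₗ[ZMod 2] B) (g : B →ₗ[ZMod 2] M) : ℕ :=
  Module.finrank (ZMod 2)
    (LinearMap.ker g ⧸ (LinearMap.range f).comap (LinearMap.ker g).subtype)

/-- The dimension of the Seifert cohomology `SH^k(T,n)`. -/
noncomputable def SHdim (G : SimpleGraph V) (k n : ℤ) : ℕ :=
  cohDim (Dgr G (k - 1) n k n) (Dgr G k n (k + 1) n)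

/-- The Seifert matrix of a graph with respect to an enumeration of its vertices. -/
noncomputable def seifertMatrix (G : SimpleGraph V) {m : ℕ} (e : V ≃ Fin m) :
    Matrix (Fin m) (Fin m) ℤ := fun i j =>
  if i = j then -1 else if i < j ∧ G.Adj (e.symm i) (e.symm j) then 1 else 0

/-- The Alexander polynomial `det (t S - Sᵀ)` of a graph with respect to an enumeration
of its vertices. -/
noncomputable def alexDet (G : SimpleGraph V) {m : ℕ} (e : V ≃ Fin m) : Polynomial ℤ :=
  let S : Matrix (Fin m) (Fin m) (Polynomial ℤ) :=
    (seifertMatrix G e).map fun a => (Polynomial.C a : Polynomial ℤ)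
  ((X : Polynomial ℤ) • S - Sᵀ).det

/-- The Alexander polynomial of a graph (or forest), defined as the matching polynomial
`Σ_R t^{|R|} (1-t)^{V - 2|R|}`, the sum being over all matchings `R`. -/
noncomputable def alexMatch (G : SimpleGraph V) : Polynomial ℤ :=
  ∑ R : {R : Finset (Sym2 V) // IsMatching G R},
    X ^ R.1.card * (1 - X) ^ (Fintype.card V - 2 * R.1.card)


/-!
The differential `D + d` is the sum over all vertices `w` of the operators that lower `w`: put a
minus at `w` and, if `w` was covered by a red edge, delete that edge and put a plus at its other
end. Likewise `d` is the sum over `w` of the operators that flip a plus at `w` to a minus. Let `E`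
send a configuration to the sum of all those obtained by replacing some of its red edges by two
pluses. Then `E` carries the lowering operator of `w` to the flip at `w`, so `E (D + d) = d E`, and
`E` is invertible because it is the identity up to terms with fewer red edges. Hence `D + d` and `d`
have isomorphic cohomology.

Flips at distinct vertices commute, and the anticommutator of the two flips at an uncovered vertex
is the identity. So flipping minus to plus at a chosen uncovered vertex contracts `d` away from the
configurations without signs, which are the perfect matchings and on which `d` vanishes: the
cohomology has dimension the number of perfect matchings. A tree has at most one.
-/

section SumLin

variable {α β γ ι : Type} [Fintype α]

lemma sumLin_apply (r : α → β → Prop) (f : α → ZMod 2) (b : β) :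
    sumLin r f b = ∑ a, if r a b then f a else 0 := rfl

lemma sumLin_single (r : α → β → Prop) (a : α) (x : ZMod 2) (b : β) :
    sumLin r (Pi.single a x) b = if r a b then x else 0 := by
  rw [sumLin_apply, Fintype.sum_eq_single a (by simp +contextual), Pi.single_eq_same]

lemma sumLin_or {r s : α → β → Prop} (h : ∀ a b, r a b → ¬ s a b) :
    sumLin (fun a b => r a b ∨ s a b) = sumLin r + sumLin s := by
  ext a b
  have := h a b
  by_cases hr : r a b <;> simp_all [sumLin_single]

lemma sumLin_exists [Fintype ι] {r : ι → α → β → Prop}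
    (h : ∀ a b i j, r i a b → r j a b → i = j) :
    sumLin (fun a b => ∃ i, r i a b) = ∑ i, sumLin (r i) := by
  ext a b
  simp only [LinearMap.comp_apply, LinearMap.single_apply, LinearMap.sum_apply, Finset.sum_apply,
    sumLin_single]
  by_cases hr : ∃ i, r i a b
  · obtain ⟨i, hi⟩ := hr
    rw [if_pos ⟨i, hi⟩, Fintype.sum_eq_single i fun j hj => if_neg fun hij => hj (h a b j i hij hi),
      if_pos hi]
  · push Not at hr
    simp [hr]

lemma sumLin_comp_map [Fintype β] (s : β → γ → Prop) (p : α → Prop) (g : α → β) :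
    sumLin s ∘ₗ sumLin (fun a b => p a ∧ b = g a) = sumLin fun a c => p a ∧ s (g a) c := by
  ext a c
  simp only [LinearMap.comp_apply, LinearMap.single_apply, sumLin_single, sumLin_apply s]
  rw [Fintype.sum_eq_single (g a) (by simp +contextual)]
  simp [← ite_and, and_comm]

lemma sumLin_comap_comp [Fintype β] (r : α → β → Prop) (q : γ → Prop) (k : γ → β) :
    sumLin (fun b c => q c ∧ b = k c) ∘ₗ sumLin r = sumLin fun a c => q c ∧ r a (k c) := by
  ext a c
  simp only [LinearMap.comp_apply, LinearMap.single_apply, sumLin_single]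
  rw [sumLin_apply, Fintype.sum_eq_single (k c) (by simp +contextual)]
  simp [sumLin_single, ← ite_and]

/- At a point of the support of `f` where `rank` is maximal, `sumLin r f` and `f` agree. -/
lemma sumLin_injective_of_rank_lt {r : α → α → Prop} (hr : ∀ a, r a a) (rank : α → ℕ)
    (hrank : ∀ a b, r a b → a ≠ b → rank b < rank a) :
    Function.Injective (sumLin r) := by
  rw [← LinearMap.ker_eq_bot, LinearMap.ker_eq_bot']
  intro f hf
  by_contra hne
  obtain ⟨b, hb, hmax⟩ :=
    Set.exists_max_image _ rank (Set.toFinite _) (Function.support_nonempty_iff.2 hne)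
  have hfb : sumLin r f b = f b := by
    rw [sumLin_apply, Fintype.sum_eq_single b, if_pos (hr b)]
    intro a hab
    split_ifs with h
    · by_contra ha
      exact (hrank a b h hab).not_ge (hmax a ha)
    · rfl
  exact hb (by rw [← hfb, hf, Pi.zero_apply])

end SumLin

section CohDim

variable {A B M A' B' M' H : Type} [AddCommGroup A] [AddCommGroup B] [AddCommGroup M]
  [AddCommGroup A'] [AddCommGroup B'] [AddCommGroup M'] [AddCommGroup H]
  [Module (ZMod 2) A] [Module (ZMod 2) B] [Module (ZMod 2) M]
  [Module (ZMod 2) A'] [Module (ZMod 2) B'] [Module (ZMod 2) M'] [Module (ZMod 2) H]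

lemma cohDim_congr {f : A →ₗ[ZMod 2] B} {g : B →ₗ[ZMod 2] M} {f' : A' →ₗ[ZMod 2] B'}
    {g' : B' →ₗ[ZMod 2] M'} (φA : A ≃ₗ[ZMod 2] A') (φB : B ≃ₗ[ZMod 2] B') (φM : M ≃ₗ[ZMod 2] M')
    (hf : φB.toLinearMap ∘ₗ f = f' ∘ₗ φA.toLinearMap)
    (hg : φM.toLinearMap ∘ₗ g = g' ∘ₗ φB.toLinearMap) :
    cohDim f g = cohDim f' g' := by
  have hf_apply (x : A) : φB (f x) = f' (φA x) := LinearMap.congr_fun hf x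
  have hg_apply (y : B) : φM (g y) = g' (φB y) := LinearMap.congr_fun hg y
  have hker : (LinearMap.ker g).map φB.toLinearMap = LinearMap.ker g' := by
    ext y
    rw [Submodule.mem_map_equiv, LinearMap.mem_ker, LinearMap.mem_ker, ← φM.map_eq_zero_iff,
      hg_apply, φB.apply_symm_apply]
  let φ : LinearMap.ker g ≃ₗ[ZMod 2] LinearMap.ker g' := φB.ofSubmodules _ _ hker
  refine (Submodule.Quotient.equiv _ _ φ ?_).finrank_eq
  ext y
  rw [Submodule.mem_map_equiv]
  simp only [Submodule.mem_comap, LinearMap.mem_range, Submodule.subtype_apply]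
  have hφ : φB (φ.symm y : B) = y := congrArg Subtype.val (φ.apply_symm_apply y)
  constructor
  · rintro ⟨x, hx⟩
    exact ⟨φA x, by rw [← hf_apply, hx, hφ]⟩
  · rintro ⟨x, hx⟩
    exact ⟨φA.symm x, φB.injective (by rw [hf_apply, φA.apply_symm_apply, hx, hφ])⟩

/- `h` and `k` form a homotopy from the identity to `i ∘ p`. -/
lemma cohDim_eq_finrank_of_retract {f : A →ₗ[ZMod 2] B} {g : B →ₗ[ZMod 2] M}
    {h : B →ₗ[ZMod 2] A} {k : M →ₗ[ZMod 2] B} {i : H →ₗ[ZMod 2] B} {p : B →ₗ[ZMod 2] H}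
    (hpf : p ∘ₗ f = 0) (hgi : g ∘ₗ i = 0) (hpi : p ∘ₗ i = LinearMap.id)
    (hhom : f ∘ₗ h + k ∘ₗ g + i ∘ₗ p = LinearMap.id) :
    cohDim f g = Module.finrank (ZMod 2) H := by
  let q : LinearMap.ker g →ₗ[ZMod 2] H := p ∘ₗ (LinearMap.ker g).subtype
  have hker : (LinearMap.range f).comap (LinearMap.ker g).subtype = LinearMap.ker q := by
    ext ⟨y, hy⟩
    refine ⟨?_, fun hpy => ⟨h y, ?_⟩⟩
    · rintro ⟨x, rfl⟩
      exact LinearMap.congr_fun hpf x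
    · have hy_eq := LinearMap.congr_fun hhom y
      simpa [LinearMap.mem_ker.1 hy, show p y = 0 from hpy] using hy_eq
  have hq : Function.Surjective q := fun z =>
    ⟨⟨i z, LinearMap.congr_fun hgi z⟩, LinearMap.congr_fun hpi z⟩
  rw [cohDim, hker, (q.quotKerEquivOfSurjective hq).finrank_eq]

end CohDim

namespace Config

variable {G : SimpleGraph V} {A B C : Config G} {v w : V}

attribute [ext] Config
omit [Fintype V]

lemma eq_of_mem_red {e f : Sym2 V} (he : e ∈ C.red) (hf : f ∈ C.red) (hve : v ∈ e) (hvf : v ∈ f) :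
    e = f := by
  by_contra hne
  exact C.matching.2 e he f hf hne v hve hvf

lemma sign_eq_none_of_mem {e : Sym2 V} (he : e ∈ C.red) (hv : v ∈ e) : C.sign v = none :=
  (C.sign_none v).2 ⟨e, he, hv⟩

/-- The configuration `C` with the sign at `w` replaced by `b`; if `w` is covered by a red edge,
this is `C` itself. -/
noncomputable def set (C : Config G) (w : V) (b : Bool) : Config G where
  red := C.red
  matching := C.matching
  sign := Function.update C.sign w ((C.sign w).map fun _ => b)
  sign_none v := by
    rw [← C.sign_none v]
    rcases eq_or_ne v w with rfl | hv <;> simp [*]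

@[simp] lemma set_red (C : Config G) (w : V) (b : Bool) : (C.set w b).red = C.red := rfl

lemma set_sign (C : Config G) (w : V) (b : Bool) :
    (C.set w b).sign = Function.update C.sign w ((C.sign w).map fun _ => b) := rfl

lemma set_sign_self (C : Config G) (w : V) (b : Bool) :
    (C.set w b).sign w = (C.sign w).map fun _ => b := by
  simp [set_sign]

lemma set_sign_of_ne (C : Config G) (b : Bool) (h : v ≠ w) :
    (C.set w b).sign v = C.sign v := by
  simp [set_sign, h]

lemma set_set (C : Config G) (w : V) (b c : Bool) : (C.set w b).set w c = C.set w c := by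
  refine Config.ext rfl ?_
  simp [set_sign, Function.comp_def]

lemma set_comm (C : Config G) (b c : Bool) (h : v ≠ w) :
    (C.set v b).set w c = (C.set w c).set v b := by
  refine Config.ext rfl ?_
  simp [set_sign, h, h.symm, Function.update_comm h]

lemma eq_set_iff {b : Bool} (h : A.sign w ≠ none) :
    C = A.set w b ↔
      C.red = A.red ∧ C.sign w = some b ∧ ∀ x, x ≠ w → C.sign x = A.sign x := by
  obtain ⟨c, hc⟩ := Option.ne_none_iff_exists'.1 h
  rw [Config.ext_iff, set_sign, Function.eq_update_iff, hc]
  rfl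

lemma set_eq_self {b : Bool} (h : C.sign w = some b) : C.set w b = C :=
  ((eq_set_iff (by simp [h])).2 ⟨rfl, h, fun _ _ => rfl⟩).symm

/-- The configuration obtained from `C` by putting a minus at `w`. If `w` is covered by a red edge
`s(u, w)`, that edge is deleted and `u` gets a plus. -/
noncomputable def lower (C : Config G) (w : V) : Config G where
  red := {e ∈ C.red | w ∉ e}
  matching := ⟨fun e he => C.matching.1 e (Finset.mem_filter.1 he).1, fun e he f hf =>
    C.matching.2 e (Finset.mem_filter.1 he).1 f (Finset.mem_filter.1 hf).1⟩
  sign x :=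
    if x = w then some false
    else if ∃ e ∈ C.red, w ∈ e ∧ x ∈ e then some true
    else C.sign x
  sign_none v := by
    simp only [Finset.mem_filter]
    split_ifs with hvw hve
    · simp [hvw]
    · obtain ⟨e, he, hwe, hve⟩ := hve
      simp only [false_iff]
      rintro ⟨f, ⟨hf, hwf⟩, hvf⟩
      exact hwf (eq_of_mem_red he hf hve hvf ▸ hwe)
    · rw [C.sign_none]
      exact ⟨fun ⟨e, he, hv⟩ => ⟨e, ⟨he, fun hw => hve ⟨e, he, hw, hv⟩⟩, hv⟩,
        fun ⟨e, he, hv⟩ => ⟨e, he.1, hv⟩⟩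

lemma lower_sign_self (C : Config G) (w : V) : (C.lower w).sign w = some false := if_pos rfl

lemma lower_sign_of_ne (C : Config G) (h : v ≠ w) :
    (C.lower w).sign v = if ∃ e ∈ C.red, w ∈ e ∧ v ∈ e then some true else C.sign v := if_neg h

lemma lower_sign_eq_some_false_iff (h : C.sign v ≠ some false) :
    (C.lower w).sign v = some false ↔ v = w := by
  simp only [lower]
  split_ifs <;> simp [*]

lemma lower_eq_set (h : C.sign w ≠ none) : C.lower w = C.set w false := by
  have hw : ∀ e ∈ C.red, w ∉ e := fun e he hwe => h (sign_eq_none_of_mem he hwe)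
  refine (eq_set_iff h).2 ⟨Finset.filter_true_of_mem hw, lower_sign_self C w, fun x hx => ?_⟩
  simp only [lower, if_neg hx]
  exact if_neg fun ⟨e, he, hwe, _⟩ => hw e he hwe

lemma eq_lower_iff {u : V} (h : s(u, w) ∈ A.red) :
    C = A.lower w ↔ C.red = A.red.erase s(u, w) ∧ (∀ x, x ∉ s(u, w) → C.sign x = A.sign x) ∧
      C.sign u = some true ∧ C.sign w = some false := by
  have huw : u ≠ w := (A.matching.1 _ h).ne
  have hmem (e : Sym2 V) (he : e ∈ A.red) : w ∈ e ↔ e = s(u, w) :=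
    ⟨fun hw => eq_of_mem_red he h hw (by simp), fun hw => by simp [hw]⟩
  have hred : (A.lower w).red = A.red.erase s(u, w) := by
    ext e
    simp +contextual [lower, hmem, and_comm]
  have hsign (x : V) : (A.lower w).sign x =
      if x = w then some false else if x = u then some true else A.sign x := by
    have : (∃ e ∈ A.red, w ∈ e ∧ x ∈ e) ↔ x ∈ s(u, w) :=
      ⟨fun ⟨e, he, hw, hx⟩ => (hmem e he).1 hw ▸ hx, fun hx => ⟨_, h, by simp, hx⟩⟩
    simp only [lower, this, Sym2.mem_iff]
    split_ifs <;> simp_all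
  rw [Config.ext_iff, hred, funext_iff]
  simp only [hsign, Sym2.mem_iff, not_or]
  refine and_congr_right fun _ => ⟨fun hC => ⟨fun x hx => ?_, ?_, ?_⟩, fun ⟨hC, hu, hw⟩ x => ?_⟩
  · simp [hC, hx]
  · simp [hC, huw]
  · simp [hC]
  · split_ifs <;> simp_all

end Config

section Steps

variable {G : SimpleGraph V} {A B C : Config G}

omit [Fintype V]

lemma dStep_iff_exists_set_false :
    dStep A C ↔ ∃ w, A.sign w = some true ∧ C = A.set w false := by
  rw [dStep, ← exists_and_left]
  refine exists_congr fun w => ?_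
  rw [and_left_comm]
  exact and_congr_right fun hw => (Config.eq_set_iff (by simp [hw])).symm

lemma dStep_iff_exists_set_true :
    dStep A C ↔ ∃ w, C.sign w = some false ∧ A = C.set w true := by
  constructor
  · rintro ⟨hred, w, hA, hC, hsign⟩
    exact ⟨w, hC, (Config.eq_set_iff (by simp [hC])).2
      ⟨hred.symm, hA, fun x hx => (hsign x hx).symm⟩⟩
  · rintro ⟨w, hC, hA⟩
    obtain ⟨hred, hA, hsign⟩ := (Config.eq_set_iff (by simp [hC])).1 hA
    exact ⟨hred.symm, w, hA, hC, fun x hx => (hsign x hx).symm⟩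

lemma DStep_iff_exists_lower :
    DStep A C ↔ ∃ w, A.sign w = none ∧ C = A.lower w := by
  constructor
  · rintro ⟨_, he, hred, hsign, u, w, rfl, hu, hw⟩
    exact ⟨w, Config.sign_eq_none_of_mem he (by simp),
      (Config.eq_lower_iff he).2 ⟨hred, hsign, hu, hw⟩⟩
  · rintro ⟨w, hw, hC⟩
    obtain ⟨e, he, hwe⟩ := (A.sign_none w).1 hw
    obtain ⟨u, rfl⟩ := Sym2.mem_iff_exists.1 hwe
    rw [Sym2.eq_swap] at he
    obtain ⟨hred, hsign, hu, hw⟩ := (Config.eq_lower_iff he).1 hC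
    exact ⟨_, he, hred, hsign, u, w, rfl, hu, hw⟩

/-- `PlusResolves A B` holds iff `B` is obtained from `A` by deleting some red edges and putting a
plus at all of their endpoints. -/
def PlusResolves (A B : Config G) : Prop :=
  B.red ⊆ A.red ∧ ∀ x, A.sign x = B.sign x ∨ A.sign x = none ∧ B.sign x = some true

lemma PlusResolves.refl (A : Config G) : PlusResolves A A :=
  ⟨Finset.Subset.refl _, fun _ => Or.inl rfl⟩

lemma PlusResolves.card_red_lt (h : PlusResolves A B) (hne : A ≠ B) :
    B.red.card < A.red.card := by
  refine Finset.card_lt_card (h.1.ssubset_of_ne fun hred => hne (Config.ext hred.symm ?_))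
  funext x
  refine (h.2 x).resolve_right fun ⟨hA, hB⟩ => ?_
  rw [A.sign_none, ← hred, ← B.sign_none, hB] at hA
  contradiction

lemma plusResolves_set_true_iff {w : V} :
    B.sign w = some false ∧ PlusResolves A (B.set w true) ↔
      A.sign w ≠ some false ∧ PlusResolves (A.lower w) B := by
  simp only [PlusResolves, Config.set_red]
  constructor
  · rintro ⟨hB, hred, hsign⟩
    have hA : A.sign w ≠ some false := by
      intro hA
      simpa [Config.set_sign_self, hA, hB] using hsign w
    have hBred (e : Sym2 V) (he : e ∈ B.red) : w ∉ e := fun hwe => by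
      simp [Config.sign_eq_none_of_mem he hwe] at hB
    refine ⟨hA, fun e he => Finset.mem_filter.2 ⟨hred he, hBred e he⟩, fun x => ?_⟩
    rcases eq_or_ne x w with rfl | hx
    · exact Or.inl ((A.lower_sign_self x).trans hB.symm)
    have hx_sign := hsign x
    rw [Config.set_sign_of_ne _ _ hx] at hx_sign
    rw [Config.lower_sign_of_ne _ hx]
    split_ifs with hwx
    · obtain ⟨e, he, hwe, hxe⟩ := hwx
      have hBx : B.sign x ≠ none := fun hBx => by
        obtain ⟨f, hf, hxf⟩ := (B.sign_none x).1 hBx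
        exact hBred f hf (Config.eq_of_mem_red he (hred hf) hxe hxf ▸ hwe)
      rw [Config.sign_eq_none_of_mem he hxe] at hx_sign
      exact Or.inl (hx_sign.resolve_left hBx.symm).2.symm
    · exact hx_sign
  · rintro ⟨hA, hred, hsign⟩
    have hB : B.sign w = some false := by
      simpa [Config.lower_sign_self, eq_comm] using hsign w
    refine ⟨hB, hred.trans (Finset.filter_subset _ _), fun x => ?_⟩
    rcases eq_or_ne x w with rfl | hx
    · rcases h : A.sign x with _ | _ | _ <;> simp_all [Config.set_sign_self]
    have hx_sign := hsign x
    rw [Config.lower_sign_of_ne _ hx] at hx_sign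
    rw [Config.set_sign_of_ne _ _ hx]
    split_ifs at hx_sign with hwx
    · obtain ⟨e, he, -, hxe⟩ := hwx
      exact Or.inr ⟨Config.sign_eq_none_of_mem he hxe, by simpa [eq_comm] using hx_sign⟩
    · exact hx_sign

end Steps

section LinearMaps

variable {G : SimpleGraph V} {C : Config G} {v w : V}

/-- The linear map sending a basis configuration with sign `!b` at `v` to the configuration with
sign `b` at `v`, and all other basis configurations to zero. -/
noncomputable def flipTo (G : SimpleGraph V) (v : V) (b : Bool) :
    (Config G → ZMod 2) →ₗ[ZMod 2] (Config G → ZMod 2) :=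
  sumLin fun A C => C.sign v = some b ∧ A = C.set v !b

/-- The linear map sending a basis configuration `A` with no minus at `w` to `A.lower w`, and all
other basis configurations to zero. -/
noncomputable def lowerMap (G : SimpleGraph V) (w : V) :
    (Config G → ZMod 2) →ₗ[ZMod 2] (Config G → ZMod 2) :=
  sumLin fun A C => A.sign w ≠ some false ∧ C = A.lower w

lemma dmap_eq_sum_flipTo (G : SimpleGraph V) : dmap G = ∑ w, flipTo G w false := by
  have hstep : dStep (G := G) = fun A C => ∃ w, C.sign w = some false ∧ A = C.set w true := by
    ext A C
    exact dStep_iff_exists_set_true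
  rw [dmap, hstep, sumLin_exists]
  · rfl
  · rintro A C v w ⟨hv, rfl⟩ ⟨-, hvw⟩
    by_contra hne
    have := congrArg (Config.sign · v) hvw
    simp [Config.set_sign_self, Config.set_sign_of_ne _ _ hne, hv] at this

lemma Dmap_add_dmap_eq_sum_lowerMap (G : SimpleGraph V) :
    Dmap G + dmap G = ∑ w, lowerMap G w := by
  have hdisj (A C : Config G) (hD : DStep A C) : ¬ dStep A C := by
    rintro ⟨hred, -⟩
    obtain ⟨e, he, herase, -⟩ := hD
    exact Finset.notMem_erase e A.red (herase ▸ hred ▸ he)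
  have hstep : (fun A C : Config G => DStep A C ∨ dStep A C) =
      fun A C => ∃ w, A.sign w ≠ some false ∧ C = A.lower w := by
    ext A C
    rw [DStep_iff_exists_lower, dStep_iff_exists_set_false, ← exists_or]
    refine exists_congr fun w => ?_
    rcases hw : A.sign w with _ | _ | _ <;> simp [A.lower_eq_set, hw]
  rw [Dmap, dmap, ← sumLin_or hdisj, hstep, sumLin_exists]
  · rfl
  · rintro A C v w ⟨hv, rfl⟩ ⟨-, hvw⟩
    rw [← Config.lower_sign_eq_some_false_iff hv, ← hvw, Config.lower_sign_self]

/-- The linear map sending a basis configuration to the sum of all configurations obtained from it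
by deleting some red edges and putting a plus at all of their endpoints. -/
noncomputable def plusMap (G : SimpleGraph V) :
    (Config G → ZMod 2) →ₗ[ZMod 2] (Config G → ZMod 2) :=
  sumLin PlusResolves

lemma plusMap_comp_lowerMap (G : SimpleGraph V) (w : V) :
    plusMap G ∘ₗ lowerMap G w = flipTo G w false ∘ₗ plusMap G := by
  rw [plusMap, lowerMap, flipTo, sumLin_comp_map, sumLin_comap_comp]
  congr
  ext A B
  exact plusResolves_set_true_iff.symm

lemma plusMap_comp_Dmap_add_dmap (G : SimpleGraph V) :
    plusMap G ∘ₗ (Dmap G + dmap G) = dmap G ∘ₗ plusMap G := by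
  rw [Dmap_add_dmap_eq_sum_lowerMap, dmap_eq_sum_flipTo, ← Module.End.mul_eq_comp,
    ← Module.End.mul_eq_comp, Finset.mul_sum, Finset.sum_mul]
  exact Finset.sum_congr rfl fun w _ => plusMap_comp_lowerMap G w

lemma plusMap_injective (G : SimpleGraph V) : Function.Injective (plusMap G) :=
  sumLin_injective_of_rank_lt PlusResolves.refl (fun C => C.red.card)
    fun _ _ => PlusResolves.card_red_lt

theorem cohDim_Dmap_add_dmap (G : SimpleGraph V) :
    cohDim (Dmap G + dmap G) (Dmap G + dmap G) = cohDim (dmap G) (dmap G) := by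
  let φ := LinearEquiv.ofInjectiveEndo (plusMap G) (plusMap_injective G)
  have hφ : φ.toLinearMap ∘ₗ (Dmap G + dmap G) = dmap G ∘ₗ φ.toLinearMap :=
    plusMap_comp_Dmap_add_dmap G
  exact cohDim_congr φ φ φ hφ hφ

lemma flipTo_apply (v : V) (b : Bool) (x : Config G → ZMod 2) (C : Config G) :
    flipTo G v b x C = if C.sign v = some b then x (C.set v !b) else 0 := by
  by_cases h : C.sign v = some b <;> simp [flipTo, sumLin_apply, h]

lemma flipTo_comm (G : SimpleGraph V) (b c : Bool) (h : v ≠ w) :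
    flipTo G v b ∘ₗ flipTo G w c = flipTo G w c ∘ₗ flipTo G v b := by
  refine LinearMap.ext fun x => funext fun C => ?_
  simp only [LinearMap.comp_apply, flipTo_apply, Config.set_sign_of_ne _ _ h,
    Config.set_sign_of_ne _ _ h.symm, C.set_comm _ _ h, ← ite_and, and_comm]

lemma flipTo_flipTo_add (h : C.sign v ≠ none) (x : Config G → ZMod 2) :
    flipTo G v false (flipTo G v true x) C + flipTo G v true (flipTo G v false x) C = x C := by
  obtain ⟨b, hb⟩ := Option.ne_none_iff_exists'.1 h
  cases b <;> simp [flipTo_apply, Config.set_sign_self, Config.set_set, Config.set_eq_self, hb]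

lemma dmap_apply (x : Config G → ZMod 2) (C : Config G) :
    dmap G x C = ∑ w, flipTo G w false x C := by
  rw [dmap_eq_sum_flipTo, LinearMap.sum_apply, Finset.sum_apply]

lemma dmap_flipTo_add (h : C.sign v ≠ none) (x : Config G → ZMod 2) :
    dmap G (flipTo G v true x) C + flipTo G v true (dmap G x) C = x C := by
  rw [dmap_apply, dmap_eq_sum_flipTo, LinearMap.sum_apply, map_sum, Finset.sum_apply,
    ← Finset.sum_add_distrib, Fintype.sum_eq_single v, flipTo_flipTo_add h]
  intro w hw
  have hcomm := LinearMap.congr_fun (flipTo_comm G false true hw) x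
  simp only [LinearMap.comp_apply] at hcomm
  rw [hcomm, CharTwo.add_self_eq_zero]

/-- A homotopy for `dmap G` contracting the configurations that carry a sign: its value at `C` is
that of `flipTo G p true`, where the vertex `p` is chosen among those not covered by `C.red`
(the choice depends on `C.red` only). -/
noncomputable def signHomotopy (G : SimpleGraph V) :
    (Config G → ZMod 2) →ₗ[ZMod 2] (Config G → ZMod 2) :=
  LinearMap.pi fun C =>
    if h : ∃ p, ∀ e ∈ C.red, p ∉ e then LinearMap.proj C ∘ₗ flipTo G h.choose true else 0

lemma exists_signHomotopy_eq_flipTo (h : C.sign v ≠ none) :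
    ∃ p, C.sign p ≠ none ∧ ∀ A : Config G, A.red = C.red → ∀ x,
      signHomotopy G x A = flipTo G p true x A := by
  have hex : ∃ p, ∀ e ∈ C.red, p ∉ e :=
    ⟨v, fun e he hv => h (Config.sign_eq_none_of_mem he hv)⟩
  refine ⟨hex.choose, fun hp => ?_, fun A hA x => ?_⟩
  · obtain ⟨e, he, hpe⟩ := (C.sign_none _).1 hp
    exact hex.choose_spec e he hpe
  · simp only [signHomotopy, LinearMap.pi_apply, hA, dif_pos hex]
    rfl

lemma dmap_signHomotopy_add (h : C.sign v ≠ none) (x : Config G → ZMod 2) :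
    dmap G (signHomotopy G x) C + signHomotopy G (dmap G x) C = x C := by
  obtain ⟨p, hp, heq⟩ := exists_signHomotopy_eq_flipTo h
  have hd : dmap G (signHomotopy G x) C = dmap G (flipTo G p true x) C := by
    rw [dmap_apply, dmap_apply]
    refine Finset.sum_congr rfl fun w _ => ?_
    rw [flipTo_apply, flipTo_apply, heq (C.set w _) rfl]
  rw [hd, heq C rfl, dmap_flipTo_add hp]

end LinearMaps

section PerfectMatching

variable {G : SimpleGraph V}

section Extension

omit [Fintype V]

/-- The configuration whose red edges are the edges of the perfect matching `R`. -/
def Config.ofPerfect (R : {R : Finset (Sym2 V) // IsPerfectMatching G R}) : Config G where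
  red := R
  matching := R.2.1
  sign _ := none
  sign_none v := by simpa using R.2.2 v

lemma Config.ofPerfect_injective : Function.Injective (Config.ofPerfect (G := G)) :=
  fun _ _ h => Subtype.ext (congrArg Config.red h)

lemma Config.mem_range_ofPerfect_iff {C : Config G} :
    C ∈ Set.range Config.ofPerfect ↔ ∀ v, C.sign v = none := by
  refine ⟨?_, fun h => ?_⟩
  · rintro ⟨R, rfl⟩ v
    rfl
  · exact ⟨⟨C.red, C.matching, fun v => (C.sign_none v).1 (h v)⟩,
      Config.ext rfl (funext fun v => (h v).symm)⟩

/-- Restriction to the configurations of the perfect matchings. -/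
noncomputable def restrictPerfect (G : SimpleGraph V) :
    (Config G → ZMod 2) →ₗ[ZMod 2] ({R : Finset (Sym2 V) // IsPerfectMatching G R} → ZMod 2) :=
  LinearMap.funLeft (ZMod 2) (ZMod 2) Config.ofPerfect

/-- Extension by zero from the configurations of the perfect matchings. -/
noncomputable def extendPerfect (G : SimpleGraph V) :
    ({R : Finset (Sym2 V) // IsPerfectMatching G R} → ZMod 2) →ₗ[ZMod 2] (Config G → ZMod 2) :=
  Function.ExtendByZero.linearMap (ZMod 2) Config.ofPerfect

lemma extendPerfect_ofPerfect (y : {R : Finset (Sym2 V) // IsPerfectMatching G R} → ZMod 2)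
    (R : {R : Finset (Sym2 V) // IsPerfectMatching G R}) :
    extendPerfect G y (Config.ofPerfect R) = y R :=
  Config.ofPerfect_injective.extend_apply y 0 R

lemma extendPerfect_of_sign_ne_none {C : Config G} {v : V} (h : C.sign v ≠ none)
    (y : {R : Finset (Sym2 V) // IsPerfectMatching G R} → ZMod 2) : extendPerfect G y C = 0 :=
  Function.extend_apply' _ _ _ fun hC => h (Config.mem_range_ofPerfect_iff.1 hC v)

lemma restrictPerfect_comp_extendPerfect (G : SimpleGraph V) :
    restrictPerfect G ∘ₗ extendPerfect G = LinearMap.id :=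
  LinearMap.ext fun y => funext fun R => extendPerfect_ofPerfect y R

end Extension

lemma dmap_ofPerfect (x : Config G → ZMod 2)
    (R : {R : Finset (Sym2 V) // IsPerfectMatching G R}) :
    dmap G x (Config.ofPerfect R) = 0 := by
  simp [dmap_apply, flipTo_apply, Config.ofPerfect]

lemma signHomotopy_ofPerfect (x : Config G → ZMod 2)
    (R : {R : Finset (Sym2 V) // IsPerfectMatching G R}) :
    signHomotopy G x (Config.ofPerfect R) = 0 := by
  have hR : ¬ ∃ p, ∀ e ∈ (Config.ofPerfect R).red, p ∉ e := by
    push Not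
    exact R.2.2
  simp only [signHomotopy, LinearMap.pi_apply, dif_neg hR, LinearMap.zero_apply]

lemma restrictPerfect_comp_dmap (G : SimpleGraph V) : restrictPerfect G ∘ₗ dmap G = 0 :=
  LinearMap.ext fun x => funext fun R => dmap_ofPerfect x R

lemma dmap_comp_extendPerfect (G : SimpleGraph V) : dmap G ∘ₗ extendPerfect G = 0 := by
  refine LinearMap.ext fun y => funext fun C => ?_
  rw [LinearMap.comp_apply, dmap_apply]
  refine Finset.sum_eq_zero fun w _ => ?_
  rw [flipTo_apply]
  split_ifs with hw
  · exact extendPerfect_of_sign_ne_none (v := w) (by simp [Config.set_sign_self, hw]) y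
  · rfl

lemma dmap_comp_signHomotopy_add (G : SimpleGraph V) :
    dmap G ∘ₗ signHomotopy G + signHomotopy G ∘ₗ dmap G + extendPerfect G ∘ₗ restrictPerfect G =
      LinearMap.id := by
  refine LinearMap.ext fun x => funext fun C => ?_
  change dmap G (signHomotopy G x) C + signHomotopy G (dmap G x) C +
    extendPerfect G (restrictPerfect G x) C = x C
  by_cases hC : ∀ v, C.sign v = none
  · obtain ⟨R, rfl⟩ := Config.mem_range_ofPerfect_iff.2 hC
    rw [dmap_ofPerfect, signHomotopy_ofPerfect, extendPerfect_ofPerfect, add_zero, zero_add]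
    rfl
  · obtain ⟨v, hv⟩ := not_forall.1 hC
    rw [dmap_signHomotopy_add hv, extendPerfect_of_sign_ne_none hv, add_zero]

theorem cohDim_dmap (G : SimpleGraph V) :
    cohDim (dmap G) (dmap G) = Nat.card {R : Finset (Sym2 V) // IsPerfectMatching G R} := by
  rw [cohDim_eq_finrank_of_retract (restrictPerfect_comp_dmap G) (dmap_comp_extendPerfect G)
    (restrictPerfect_comp_extendPerfect G) (dmap_comp_signHomotopy_add G),
    Module.finrank_fintype_fun_eq_card, Nat.card_eq_fintype_card]

end PerfectMatching

section Acyclic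

variable {G : SimpleGraph V} {R R' : Finset (Sym2 V)}

/-- The spanning subgraph of `G` whose edges are those of the matching `R`. -/
def IsMatching.toSubgraph (h : IsMatching G R) : G.Subgraph where
  verts := Set.univ
  Adj u v := s(u, v) ∈ R
  adj_sub he := h.1 _ he
  edge_vert _ := Set.mem_univ _
  symm := ⟨fun u v he => by rwa [Sym2.eq_swap]⟩

omit [Fintype V] in
lemma IsPerfectMatching.isPerfectMatching_toSubgraph (h : IsPerfectMatching G R) :
    h.1.toSubgraph.IsPerfectMatching := by
  rw [SimpleGraph.Subgraph.isPerfectMatching_iff]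
  intro v
  obtain ⟨e, he, hv⟩ := h.2 v
  obtain ⟨w, rfl⟩ := Sym2.mem_iff_exists.1 hv
  refine ⟨w, he, fun w' (hw' : s(v, w') ∈ R) => ?_⟩
  by_contra hne
  exact h.1.2 _ he _ hw' (fun heq => hne (Sym2.congr_right.1 heq).symm) v (by simp) (by simp)

/- The symmetric difference of two perfect matchings is a disjoint union of cycles. -/
omit [Fintype V] in
lemma IsPerfectMatching.eq_of_isAcyclic [Finite V] (hG : G.IsAcyclic)
    (h : IsPerfectMatching G R) (h' : IsPerfectMatching G R') : R = R' := by
  set H := symmDiff h.1.toSubgraph.spanningCoe h'.1.toSubgraph.spanningCoe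
  have hcycles : H.IsCycles :=
    h.isPerfectMatching_toSubgraph.symmDiff_isCycles h'.isPerfectMatching_toSubgraph
  have hle : H ≤ G := symmDiff_le_sup.trans (sup_le (SimpleGraph.Subgraph.spanningCoe_le _)
    (SimpleGraph.Subgraph.spanningCoe_le _))
  have hbot : H = ⊥ := by
    refine SimpleGraph.eq_bot_iff_forall_not_adj.2 fun u v huv => ?_
    have hbridge := SimpleGraph.isAcyclic_iff_forall_adj_isBridge.1 hG (hle huv)
    rw [SimpleGraph.isBridge_iff] at hbridge
    exact hbridge ((hcycles.reachable_deleteEdges huv).mono (SimpleGraph.deleteEdges_mono hle))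
  have hadj := congrArg SimpleGraph.Adj (symmDiff_eq_bot.1 hbot)
  ext e
  induction e with
  | _ u v => exact iff_of_eq (congrFun₂ hadj u v)

lemma card_isPerfectMatching_of_isAcyclic (hG : G.IsAcyclic) :
    Nat.card {R : Finset (Sym2 V) // IsPerfectMatching G R} =
      if ∃ R : Finset (Sym2 V), IsPerfectMatching G R then 1 else 0 := by
  have : Subsingleton {R : Finset (Sym2 V) // IsPerfectMatching G R} :=
    ⟨fun R R' => Subtype.ext (R.2.eq_of_isAcyclic hG R'.2)⟩
  split_ifs with h
  · obtain ⟨R, hR⟩ := h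
    exact Nat.card_eq_one_iff_unique.2 ⟨this, ⟨R, hR⟩⟩
  · push Not at h
    have : IsEmpty {R : Finset (Sym2 V) // IsPerfectMatching G R} := ⟨fun R => h R R.2⟩
    exact Nat.card_of_isEmpty

end Acyclic

theorem total_cohomology_dim_general (G : SimpleGraph V) :
    cohDim (Dmap G + dmap G) (Dmap G + dmap G) =
      Nat.card {R : Finset (Sym2 V) // IsPerfectMatching G R} :=
  (cohDim_Dmap_add_dmap G).trans (cohDim_dmap G)

/-- the total dimension of the cohomology of `(SC(T), D + d)` is `1` if `T`
admits a perfect matching and `0` otherwise. -/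
theorem total_cohomology_dim (G : SimpleGraph V) (hG : G.IsTree) :
    cohDim (Dmap G + dmap G) (Dmap G + dmap G) =
      if ∃ R : Finset (Sym2 V), IsPerfectMatching G R then 1 else 0 := by
  rw [total_cohomology_dim_general, card_isPerfectMatching_of_isAcyclic hG.isAcyclic]

end Seifert
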